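/- Let k, b, c, μ ∈ ℝ, a₀ > 0, and let W₀, V₀ ∈ ℝ³ with |W₀| = 1 and W₀·V₀ = 0. Then there exists a spherical profile W : [a₀, ∞) → ℝ³ defined on all of [a₀,∞) (i.e. a twice differentiable map with |W(a)| = 1 solving the reduced equivariant equation for every a ≥ a₀) with W(a₀) = W₀ and W′(a₀) = V₀; that is, solutions on the compact target S² never blow up in finite radial variable. -/

import Mathlib

open Set

/-- Euclidean dot product on `ℝ³`. -/
noncomputable def dot3 (v w : Fin 3 → ℝ) : ℝ := v 0 * w 0 + v 1 * w 1 + v 2 * w 2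

/-- Cross product on `ℝ³`. -/
noncomputable def cross3 (v w : Fin 3 → ℝ) : Fin 3 → ℝ :=
  ![v 1 * w 2 - v 2 * w 1, v 2 * w 0 - v 0 * w 2, v 0 * w 1 - v 1 * w 0]

/-- The north pole `e₀ = (1,0,0)`. -/
noncomputable def e0 : Fin 3 → ℝ := ![1, 0, 0]

/-- `g(w) = (k²/2)(1 − w²) + bk(1 − w) − k²(1 − w)²`. -/
noncomputable def gfun (k b : ℝ) (w : ℝ) : ℝ :=
  k ^ 2 / 2 * (1 - w ^ 2) + b * k * (1 - w) - k ^ 2 * (1 - w) ^ 2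

/-- A spherical profile on `J ⊆ (0,∞)`: a twice differentiable `W : J → S² ⊂ ℝ³`
solving the reduced equivariant equation (4.8). -/
def IsSphProfile (k b c μ : ℝ) (J : Set ℝ) (W : ℝ → Fin 3 → ℝ) : Prop :=
  J ⊆ Ioi (0:ℝ) ∧
  (∀ a ∈ J, DifferentiableAt ℝ W a ∧ DifferentiableAt ℝ (deriv W) a) ∧
  (∀ a ∈ J, dot3 (W a) (W a) = 1) ∧
  (∀ a ∈ J,
    deriv (deriv W) a + dot3 (deriv W a) (deriv W a) • W a + (1 / a) • deriv W a
      + (deriv (gfun k b) (dot3 (W a) e0) / a ^ 2) • (e0 - dot3 (W a) e0 • W a)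
      + μ • (e0 - dot3 (W a) e0 • W a)
      + (c / a) • cross3 (W a) (deriv W a) = 0)

/-!
In the logarithmic radius `t = log (a / a₀)` the reduced equation loses its damping term and becomes
`Ẅ + |Ẇ|² W + f - (f · W) W + c W × Ẇ = 0` with the force `f = (g'(W · e₀) + μ a²) e₀`. With the
angular momentum `L = W × Ẇ` as second unknown this is the first-order system `ȧ = a`, `Ẇ = L × W`,
`L̇ = c L × W - W × f`, which has a smooth vector field on the whole space and the first integrals
`|W|²` and `L · W`. Since `|W| = 1` gives `|f| = O(1 + a²)`, and the `c`-term does no work, the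
energy `1 + a⁴ + |L|²` changes at most at an exponential rate. Its sublevel sets are bounded, so the
flows of compactly supported cutoffs of the vector field follow the system for arbitrarily long
times, and the solutions are global.
-/

open scoped Matrix Manifold

section GlobalFlow

variable {E : Type*} [NormedAddCommGroup E] [NormedSpace ℝ E]

lemma isMIntegralCurveOn_iff_isIntegralCurveOn {γ : ℝ → E} {v : E → E} {s : Set ℝ} :
    IsMIntegralCurveOn (I := 𝓘(ℝ, E)) γ v s ↔ IsIntegralCurveOn γ (fun _ => v) s :=
  forall₂_congr fun _ _ => hasMFDerivWithinAt_iff_hasFDerivWithinAt.trans <| by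
    rw [hasDerivWithinAt_iff_hasFDerivWithinAt]
    rfl

lemma exists_isIntegralCurve_of_forall_Ioo [CompleteSpace E] {v : E → E} (hv : ContDiff ℝ 1 v)
    {x : E} (h : ∀ T, ∃ γ, γ 0 = x ∧ IsIntegralCurveOn γ (fun _ => v) (Ioo (-T) T)) :
    ∃ γ, γ 0 = x ∧ IsIntegralCurve γ (fun _ => v) := by
  simp only [← isMIntegralCurveOn_iff_isIntegralCurveOn] at h
  obtain ⟨γ, hγ₀, hγ⟩ := (exists_isMIntegralCurve_iff_exists_isMIntegralCurveOn_Ioo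
    (contMDiff_vectorSpace_iff_contDiff.2 hv) x).2 h
  exact ⟨γ, hγ₀, isIntegralCurveOn_univ.1 <| isMIntegralCurveOn_iff_isIntegralCurveOn.1 <|
    hγ.isMIntegralCurveOn univ⟩

lemma exists_isIntegralCurve_of_hasCompactSupport [CompleteSpace E] {v : E → E}
    (hv : ContDiff ℝ 1 v) (hsupp : HasCompactSupport v) (x : E) :
    ∃ γ, γ 0 = x ∧ IsIntegralCurve γ (fun _ => v) := by
  refine exists_isIntegralCurve_of_forall_Ioo hv fun T => ?_
  rcases le_or_gt T 0 with hT | hT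
  · refine ⟨fun _ => x, rfl, ?_⟩
    rw [Ioo_eq_empty (by linarith)]
    exact fun t ht => ht.elim
  obtain ⟨K, hK⟩ := hv.lipschitzWith_of_hasCompactSupport hsupp one_ne_zero
  obtain ⟨L, hL⟩ := hsupp.exists_bound_of_continuous hv.continuous
  lift L to NNReal using (norm_nonneg _).trans (hL x)
  lift T to NNReal using hT.le
  obtain ⟨γ, hγ₀, hγ⟩ := (IsPicardLindelof.of_time_independent (tmin := -T) (tmax := T)
    (t₀ := ⟨0, by simp⟩) (x₀ := x) (a := L * T) (r := 0) (fun y _ => hL y) hK.lipschitzOnWith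
    (by simp)).exists_eq_forall_mem_Icc_hasDerivWithinAt₀
  exact ⟨γ, hγ₀, IsIntegralCurveOn.mono hγ Ioo_subset_Icc_self⟩

lemma norm_le_norm_mul_exp_of_norm_deriv_le {u u' : ℝ → E} {C : ℝ}
    (hu : ∀ t, HasDerivAt u (u' t) t) (hC : ∀ t, ‖u' t‖ ≤ C * ‖u t‖) (t : ℝ) :
    ‖u t‖ ≤ ‖u 0‖ * Real.exp (C * |t|) := by
  have forward {w w' : ℝ → E} (hw : ∀ s, HasDerivAt w (w' s) s) (hw' : ∀ s, ‖w' s‖ ≤ C * ‖w s‖)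
      {s : ℝ} (hs : 0 ≤ s) : ‖w s‖ ≤ ‖w 0‖ * Real.exp (C * s) := by
    simpa only [gronwallBound_ε0, sub_zero] using norm_le_gronwallBound_of_norm_deriv_right_le
      (HasDerivAt.continuousOn fun r _ => hw r) (fun r _ => (hw r).hasDerivWithinAt) le_rfl
      (fun r _ => (hw' r).trans_eq (add_zero _).symm) s ⟨hs, le_rfl⟩
  rcases le_total 0 t with ht | ht
  · simpa only [abs_of_nonneg ht] using forward hu hC ht
  · have reversed (s : ℝ) : HasDerivAt (fun s => u (-s)) (-u' (-s)) s := by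
      simpa using! (hu (-s)).scomp s (hasDerivAt_neg s)
    simpa [abs_of_nonpos ht] using
      forward reversed (fun s => by simpa using hC (-s)) (neg_nonneg.2 ht)

lemma hasDerivAt_comp_of_isIntegralCurve {G : Type*} [NormedAddCommGroup G] [NormedSpace ℝ G]
    {v : E → E} {I : E → G} (hI : Differentiable ℝ I) {γ : ℝ → E}
    (hγ : IsIntegralCurve γ (fun _ => v)) (t : ℝ) :
    HasDerivAt (fun s => I (γ s)) (fderiv ℝ I (γ t) (v (γ t))) t :=
  (hI (γ t)).hasFDerivAt.comp_hasDerivAt t (hγ t)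

lemma eq_of_isIntegralCurve_of_fderiv_eq_zero {G : Type*} [NormedAddCommGroup G]
    [NormedSpace ℝ G] {v : E → E} {I : E → G} (hI : Differentiable ℝ I)
    (hIv : ∀ x, fderiv ℝ I x (v x) = 0) {γ : ℝ → E} (hγ : IsIntegralCurve γ (fun _ => v)) (t : ℝ) :
    I (γ t) = I (γ 0) := by
  have h (s : ℝ) : HasDerivAt (fun s => I (γ s)) 0 s :=
    hIv (γ s) ▸ hasDerivAt_comp_of_isIntegralCurve hI hγ s
  exact is_const_of_deriv_eq_zero (fun s => (h s).differentiableAt) (fun s => (h s).deriv) t 0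

theorem exists_isIntegralCurve_of_lyapunov [FiniteDimensional ℝ E] {G : Type*}
    [NormedAddCommGroup G] [NormedSpace ℝ G] {v : E → E} (hv : ContDiff ℝ 1 v)
    {I : E → G} (hI : Differentiable ℝ I) (hIv : ∀ x, fderiv ℝ I x (v x) = 0)
    {N : E → ℝ} (hN : Differentiable ℝ N) {x₀ : E} {C : ℝ}
    (hNv : ∀ x, I x = I x₀ → ‖fderiv ℝ N x (v x)‖ ≤ C * ‖N x‖)
    (hbdd : ∀ R, Bornology.IsBounded {x | I x = I x₀ ∧ ‖N x‖ ≤ R}) :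
    ∃ γ, γ 0 = x₀ ∧ IsIntegralCurve γ (fun _ => v) := by
  have := FiniteDimensional.complete ℝ E
  refine exists_isIntegralCurve_of_forall_Ioo hv fun T => ?_
  obtain ⟨R, hR₀, hR⟩ := (hbdd (‖N x₀‖ * Real.exp (|C| * T))).exists_pos_norm_le
  let χ : ContDiffBump (0 : E) := ⟨R, R + 1, hR₀, lt_add_one R⟩
  obtain ⟨γ, hγ₀, hγ⟩ := exists_isIntegralCurve_of_hasCompactSupport
    (v := fun x => χ x • v x) (χ.contDiff.smul hv) χ.hasCompactSupport.smul_right x₀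
  have hIγ (t : ℝ) : I (γ t) = I x₀ :=
    hγ₀ ▸ eq_of_isIntegralCurve_of_fderiv_eq_zero hI (fun x => by simp [hIv x]) hγ t
  have hNγ (t : ℝ) : ‖N (γ t)‖ ≤ ‖N x₀‖ * Real.exp (|C| * |t|) := by
    refine hγ₀ ▸ norm_le_norm_mul_exp_of_norm_deriv_le
      (hasDerivAt_comp_of_isIntegralCurve hN hγ) (fun s => ?_) t
    calc ‖fderiv ℝ N (γ s) (χ (γ s) • v (γ s))‖
        = χ (γ s) * ‖fderiv ℝ N (γ s) (v (γ s))‖ := by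
          rw [map_smul, norm_smul, Real.norm_of_nonneg χ.nonneg]
      _ ≤ ‖fderiv ℝ N (γ s) (v (γ s))‖ := mul_le_of_le_one_left (norm_nonneg _) χ.le_one
      _ ≤ C * ‖N (γ s)‖ := hNv _ (hIγ s)
      _ ≤ |C| * ‖N (γ s)‖ := by gcongr; exact le_abs_self C
  refine ⟨γ, hγ₀, fun t ht => ?_⟩
  have hγR : ‖γ t‖ ≤ R := hR _ ⟨hIγ t, (hNγ t).trans (by have := abs_lt.2 ht; gcongr)⟩
  have hχ : χ (γ t) = 1 := χ.one_of_mem_closedBall (mem_closedBall_zero_iff.2 hγR)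
  simpa only [hχ, one_smul] using (hγ t).hasDerivWithinAt

end GlobalFlow

section DotCross

lemma cross_cross_self_of_orthonormal {R : Type*} [CommRing R] {l w : Fin 3 → R}
    (hw : w ⬝ᵥ w = 1) (hl : l ⬝ᵥ w = 0) : l ⨯₃ (l ⨯₃ w) = -((l ⨯₃ w ⬝ᵥ l ⨯₃ w) • w) := by
  simp [cross_cross_eq_smul_sub_smul', cross_dot_cross, hw, hl]

lemma cross_dot_cross_self_le (u v : Fin 3 → ℝ) :
    u ⨯₃ v ⬝ᵥ u ⨯₃ v ≤ (u ⬝ᵥ u) * (v ⬝ᵥ v) := by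
  rw [cross_dot_cross, dotProduct_comm v u]
  exact sub_le_self _ (mul_self_nonneg _)

variable {E ι : Type*} [NormedAddCommGroup E] [NormedSpace ℝ E] [Fintype ι]

lemma dotProduct_self_nonneg (v : ι → ℝ) : 0 ≤ v ⬝ᵥ v :=
  dotProduct_star_self_nonneg v

lemma two_mul_abs_dotProduct_le (u v : ι → ℝ) : 2 * |u ⬝ᵥ v| ≤ u ⬝ᵥ u + v ⬝ᵥ v := by
  have hsub := dotProduct_self_nonneg (u - v)
  have hadd := dotProduct_self_nonneg (u + v)
  simp only [sub_dotProduct, dotProduct_sub, add_dotProduct, dotProduct_add,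
    dotProduct_comm v u] at hsub hadd
  cases abs_cases (u ⬝ᵥ v) <;> linarith

lemma norm_sq_le_dotProduct_self (v : ι → ℝ) : ‖v‖ ^ 2 ≤ v ⬝ᵥ v := by
  refine Real.le_sqrt (norm_nonneg v) (dotProduct_self_nonneg v) |>.1 ?_
  refine (pi_norm_le_iff_of_nonneg (Real.sqrt_nonneg _)).2 fun i => Real.abs_le_sqrt ?_
  rw [sq]
  exact Finset.single_le_sum (fun j _ => mul_self_nonneg (v j)) (Finset.mem_univ i)

lemma differentiable_dotProduct {f g : E → ι → ℝ} (hf : Differentiable ℝ f)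
    (hg : Differentiable ℝ g) : Differentiable ℝ fun x => f x ⬝ᵥ g x := by
  simp only [dotProduct]
  fun_prop

lemma fderiv_dotProduct_apply {f g : E → ι → ℝ} {x : E} (hf : DifferentiableAt ℝ f x)
    (hg : DifferentiableAt ℝ g x) (y : E) :
    fderiv ℝ (fun z => f z ⬝ᵥ g z) x y = f x ⬝ᵥ fderiv ℝ g x y + fderiv ℝ f x y ⬝ᵥ g x :=
  DFunLike.congr_fun ((dotProductBilin (m := ι) (A := ℝ) ℝ ℝ).toContinuousBilinearMap
    |>.fderiv_of_bilinear hf hg) y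

lemma hasDerivAt_crossProduct {u v : ℝ → Fin 3 → ℝ} {u' v' : Fin 3 → ℝ} {t : ℝ}
    (hu : HasDerivAt u u' t) (hv : HasDerivAt v v' t) :
    HasDerivAt (fun s => u s ⨯₃ v s) (u t ⨯₃ v' + u' ⨯₃ v t) t :=
  (crossProduct (R := ℝ)).toContinuousBilinearMap.hasDerivAt_of_bilinear (fun _ => hu) fun _ => hv

lemma contDiff_crossProduct {f g : E → Fin 3 → ℝ} {n : WithTop ℕ∞} (hf : ContDiff ℝ n f)
    (hg : ContDiff ℝ n g) : ContDiff ℝ n fun x => f x ⨯₃ g x :=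
  ((crossProduct (R := ℝ)).toContinuousBilinearMap.contDiff.comp hf).clm_apply hg

end DotCross

section RadialSystem

/-- States `(a, W, L)` of the radial system: the radius `a`, the position `W` and the angular
momentum `L = W × Ẇ`, where the dot is the derivative in the logarithmic time `log a`. -/
abbrev RadialState : Type := ℝ × (Fin 3 → ℝ) × (Fin 3 → ℝ)

/-- The vector field of the radial system `ȧ = a`, `Ẇ = L × W`, `L̇ = c L × W - W × f (a, W)` in
logarithmic time. On `|W| = 1`, `L · W = 0` it is equivalent to
`Ẅ + |Ẇ|² W + f - (f · W) W + c W × Ẇ = 0`. -/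
def radialField (c : ℝ) (f : ℝ × (Fin 3 → ℝ) → Fin 3 → ℝ) (x : RadialState) : RadialState :=
  (x.1, x.2.2 ⨯₃ x.2.1, c • (x.2.2 ⨯₃ x.2.1) - x.2.1 ⨯₃ f (x.1, x.2.1))

/-- The Lyapunov function of the radial system. The fourth power of the radius is the one that
dominates the square of a force growing like `a²`. -/
def radialEnergy (x : RadialState) : ℝ := 1 + x.1 ^ 4 + x.2.2 ⬝ᵥ x.2.2

variable {c : ℝ} {f : ℝ × (Fin 3 → ℝ) → Fin 3 → ℝ}

lemma contDiff_radialField (hf : ContDiff ℝ 1 f) : ContDiff ℝ 1 (radialField c f) := by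
  have hW : ContDiff ℝ 1 fun x : RadialState => x.2.1 := by fun_prop
  have hL : ContDiff ℝ 1 fun x : RadialState => x.2.2 := by fun_prop
  have hV := contDiff_crossProduct hL hW
  have hfW : ContDiff ℝ 1 fun x : RadialState => f (x.1, x.2.1) := by fun_prop
  exact contDiff_fst.prodMk (hV.prodMk ((hV.const_smul c).sub (contDiff_crossProduct hW hfW)))

lemma fderiv_position_apply (x y : RadialState) :
    fderiv ℝ (fun z : RadialState => z.2.1) x y = y.2.1 := by
  simp [fderiv.fst, fderiv_snd]

lemma fderiv_momentum_apply (x y : RadialState) :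
    fderiv ℝ (fun z : RadialState => z.2.2) x y = y.2.2 := by
  simp [fderiv.snd]

lemma fderiv_position_dot_position_radialField (x : RadialState) :
    fderiv ℝ (fun z : RadialState => z.2.1 ⬝ᵥ z.2.1) x (radialField c f x) = 0 := by
  rw [fderiv_dotProduct_apply (by fun_prop) (by fun_prop), fderiv_position_apply,
    dotProduct_comm _ x.2.1]
  simp [radialField]

lemma fderiv_momentum_dot_position_radialField (x : RadialState) :
    fderiv ℝ (fun z : RadialState => z.2.2 ⬝ᵥ z.2.1) x (radialField c f x) = 0 := by
  rw [fderiv_dotProduct_apply (by fun_prop) (by fun_prop), fderiv_position_apply,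
    fderiv_momentum_apply, dotProduct_comm _ x.2.1]
  simp [radialField]

lemma differentiable_radialEnergy : Differentiable ℝ radialEnergy :=
  (by fun_prop : Differentiable ℝ fun x : RadialState => 1 + x.1 ^ 4).add
    (differentiable_dotProduct (by fun_prop) (by fun_prop))

lemma fderiv_radialEnergy_radialField (x : RadialState) :
    fderiv ℝ radialEnergy x (radialField c f x) =
      4 * x.1 ^ 4 - 2 * (x.2.2 ⬝ᵥ x.2.1 ⨯₃ f (x.1, x.2.1)) := by
  have hL : Differentiable ℝ fun z : RadialState => z.2.2 ⬝ᵥ z.2.2 :=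
    differentiable_dotProduct (by fun_prop) (by fun_prop)
  have h : fderiv ℝ radialEnergy x = fderiv ℝ (fun z : RadialState => 1 + z.1 ^ 4) x +
      fderiv ℝ (fun z : RadialState => z.2.2 ⬝ᵥ z.2.2) x :=
    fderiv_fun_add (by fun_prop) hL.differentiableAt
  rw [h, add_apply, fderiv_dotProduct_apply (by fun_prop) (by fun_prop),
    fderiv_momentum_apply, dotProduct_comm _ x.2.2]
  simp [fderiv_fst, fderiv_fun_pow, radialField]
  ring

lemma isBounded_radialEnergy_le (R : ℝ) :
    Bornology.IsBounded {x : RadialState | x.2.1 ⬝ᵥ x.2.1 = 1 ∧ ‖radialEnergy x‖ ≤ R} := by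
  refine isBounded_iff_forall_norm_le.2 ⟨max R 1, fun x ⟨hW, hR⟩ => ?_⟩
  have hE : 1 + x.1 ^ 4 + x.2.2 ⬝ᵥ x.2.2 ≤ R := (le_abs_self _).trans hR
  have hL := norm_sq_le_dotProduct_self x.2.2
  have ha : ‖x.1‖ ≤ R := by
    rw [Real.norm_eq_abs]
    cases abs_cases x.1 <;>
      nlinarith [sq_nonneg (x.1 ^ 2 - 1), sq_nonneg (x.1 - 1), sq_nonneg (x.1 + 1)]
  refine norm_prod_le_iff.2 ⟨le_max_of_le_left ha,
    norm_prod_le_iff.2 ⟨le_max_of_le_right ?_, le_max_of_le_left ?_⟩⟩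
  · exact (sq_le_one_iff₀ (norm_nonneg _)).1 (hW ▸ norm_sq_le_dotProduct_self x.2.1)
  · nlinarith [sq_nonneg (‖x.2.2‖ - 1), sq_nonneg (x.1 ^ 2)]

lemma norm_fderiv_radialEnergy_radialField_le {K : ℝ}
    (hK : ∀ a w, w ⬝ᵥ w = 1 → f (a, w) ⬝ᵥ f (a, w) ≤ K * (1 + a ^ 4)) {x : RadialState}
    (hx : x.2.1 ⬝ᵥ x.2.1 = 1) :
    ‖fderiv ℝ radialEnergy x (radialField c f x)‖ ≤ (K + 4) * ‖radialEnergy x‖ := by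
  obtain ⟨a, w, l⟩ := x
  have hK₀ : 0 ≤ K := by simpa using (dotProduct_self_nonneg _).trans (hK 0 w hx)
  have hl : 0 ≤ l ⬝ᵥ l := dotProduct_self_nonneg l
  have htorque : 2 * |l ⬝ᵥ w ⨯₃ f (a, w)| ≤ l ⬝ᵥ l + K * (1 + a ^ 4) :=
    calc 2 * |l ⬝ᵥ w ⨯₃ f (a, w)|
        ≤ l ⬝ᵥ l + w ⨯₃ f (a, w) ⬝ᵥ w ⨯₃ f (a, w) := two_mul_abs_dotProduct_le _ _
      _ ≤ l ⬝ᵥ l + (w ⬝ᵥ w) * (f (a, w) ⬝ᵥ f (a, w)) := by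
        gcongr
        exact cross_dot_cross_self_le _ _
      _ ≤ l ⬝ᵥ l + K * (1 + a ^ 4) := by
        rw [hx, one_mul]
        gcongr
        exact hK a w hx
  have hE : ‖radialEnergy (a, w, l)‖ = 1 + a ^ 4 + l ⬝ᵥ l :=
    abs_of_nonneg (by simp only [radialEnergy]; positivity)
  rw [fderiv_radialEnergy_radialField, hE]
  calc ‖4 * a ^ 4 - 2 * (l ⬝ᵥ w ⨯₃ f (a, w))‖
      ≤ ‖4 * a ^ 4‖ + ‖2 * (l ⬝ᵥ w ⨯₃ f (a, w))‖ := norm_sub_le _ _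
    _ = 4 * a ^ 4 + 2 * |l ⬝ᵥ w ⨯₃ f (a, w)| := by
      rw [Real.norm_of_nonneg (by positivity), norm_mul, Real.norm_two, Real.norm_eq_abs]
    _ ≤ (K + 4) * (1 + a ^ 4 + l ⬝ᵥ l) := by nlinarith [mul_nonneg hK₀ hl]

theorem exists_isIntegralCurve_radialField (hf : ContDiff ℝ 1 f) {K : ℝ}
    (hK : ∀ a w, w ⬝ᵥ w = 1 → f (a, w) ⬝ᵥ f (a, w) ≤ K * (1 + a ^ 4)) {x₀ : RadialState}
    (hx₀ : x₀.2.1 ⬝ᵥ x₀.2.1 = 1) :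
    ∃ γ, γ 0 = x₀ ∧ IsIntegralCurve γ (fun _ => radialField c f) := by
  refine exists_isIntegralCurve_of_lyapunov (contDiff_radialField hf)
    (differentiable_dotProduct (by fun_prop) (by fun_prop))
    fderiv_position_dot_position_radialField differentiable_radialEnergy
    (fun x hx => norm_fderiv_radialEnergy_radialField_le hK (hx.trans hx₀)) ?_
  simpa only [hx₀] using isBounded_radialEnergy_le

section IntegralCurve

variable {γ : ℝ → RadialState}

lemma radius_eq_mul_exp (hγ : IsIntegralCurve γ (fun _ => radialField c f)) (t : ℝ) :
    (γ t).1 = (γ 0).1 * Real.exp t := by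
  have hradius (s : ℝ) : HasDerivAt (fun s => (γ s).1) (γ s).1 s := by
    simpa [fderiv_fst, radialField] using
      hasDerivAt_comp_of_isIntegralCurve (I := Prod.fst) differentiable_fst hγ s
  have hquot (s : ℝ) : HasDerivAt (fun s => (γ s).1 * Real.exp (-s)) 0 s :=
    ((hradius s).mul (hasDerivAt_neg s).exp).congr_deriv (by ring)
  have hconst := is_const_of_deriv_eq_zero (fun s => (hquot s).differentiableAt)
    (fun s => (hquot s).deriv) t 0
  rw [neg_zero, Real.exp_zero, mul_one, Real.exp_neg] at hconst
  exact (mul_inv_eq_iff_eq_mul₀ (Real.exp_pos t).ne').1 hconst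

lemma hasDerivAt_position (hγ : IsIntegralCurve γ (fun _ => radialField c f)) (t : ℝ) :
    HasDerivAt (fun s => (γ s).2.1) ((γ t).2.2 ⨯₃ (γ t).2.1) t :=
  (hasDerivAt_comp_of_isIntegralCurve (I := fun x : RadialState => x.2.1) (by fun_prop) hγ
    t).congr_deriv (fderiv_position_apply _ _)

lemma hasDerivAt_momentum (hγ : IsIntegralCurve γ (fun _ => radialField c f)) (t : ℝ) :
    HasDerivAt (fun s => (γ s).2.2)
      (c • ((γ t).2.2 ⨯₃ (γ t).2.1) - (γ t).2.1 ⨯₃ f ((γ t).1, (γ t).2.1)) t :=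
  (hasDerivAt_comp_of_isIntegralCurve (I := fun x : RadialState => x.2.2) (by fun_prop) hγ
    t).congr_deriv (fderiv_momentum_apply _ _)

lemma hasDerivAt_momentum_cross_position (hγ : IsIntegralCurve γ (fun _ => radialField c f))
    {t a : ℝ} {w l : Fin 3 → ℝ} (ht : γ t = (a, w, l)) (hw : w ⬝ᵥ w = 1) (hl : l ⬝ᵥ w = 0) :
    HasDerivAt (fun s => (γ s).2.2 ⨯₃ (γ s).2.1)
      (-((l ⨯₃ w ⬝ᵥ l ⨯₃ w) • w) - (f (a, w) - (f (a, w) ⬝ᵥ w) • w) - c • (w ⨯₃ (l ⨯₃ w))) t := by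
  have htension : (w ⨯₃ f (a, w)) ⨯₃ w = f (a, w) - (f (a, w) ⬝ᵥ w) • w := by
    rw [cross_cross_eq_smul_sub_smul, hw, one_smul]
  refine (hasDerivAt_crossProduct (hasDerivAt_momentum hγ t)
    (hasDerivAt_position hγ t)).congr_deriv ?_
  simp only [ht, map_sub, map_smul, LinearMap.sub_apply, LinearMap.smul_apply]
  rw [cross_cross_self_of_orthonormal hw hl, htension, ← cross_anticomm w (l ⨯₃ w)]
  module

end IntegralCurve

theorem exists_unit_curve_of_force (hf : ContDiff ℝ 1 f) {K : ℝ}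
    (hK : ∀ a w, w ⬝ᵥ w = 1 → f (a, w) ⬝ᵥ f (a, w) ≤ K * (1 + a ^ 4)) (a₀ : ℝ)
    {W₀ P₀ : Fin 3 → ℝ} (hW₀ : W₀ ⬝ᵥ W₀ = 1) (hP₀ : W₀ ⬝ᵥ P₀ = 0) :
    ∃ w p : ℝ → Fin 3 → ℝ, w 0 = W₀ ∧ p 0 = P₀ ∧ ∀ t,
      w t ⬝ᵥ w t = 1 ∧ HasDerivAt w (p t) t ∧
      HasDerivAt p (-((p t ⬝ᵥ p t) • w t)
        - (f (a₀ * Real.exp t, w t) - (f (a₀ * Real.exp t, w t) ⬝ᵥ w t) • w t)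
        - c • (w t ⨯₃ p t)) t := by
  obtain ⟨γ, hγ₀, hγ⟩ := exists_isIntegralCurve_radialField (c := c) hf hK
    (x₀ := (a₀, W₀, W₀ ⨯₃ P₀)) hW₀
  have hunit (t : ℝ) : (γ t).2.1 ⬝ᵥ (γ t).2.1 = 1 := by
    rw [eq_of_isIntegralCurve_of_fderiv_eq_zero (I := fun x : RadialState => x.2.1 ⬝ᵥ x.2.1)
      (differentiable_dotProduct (by fun_prop) (by fun_prop))
      fderiv_position_dot_position_radialField hγ t, hγ₀, hW₀]
  have horth (t : ℝ) : (γ t).2.2 ⬝ᵥ (γ t).2.1 = 0 := by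
    rw [eq_of_isIntegralCurve_of_fderiv_eq_zero (I := fun x : RadialState => x.2.2 ⬝ᵥ x.2.1)
      (differentiable_dotProduct (by fun_prop) (by fun_prop))
      fderiv_momentum_dot_position_radialField hγ t, hγ₀, dotProduct_comm, dot_self_cross]
  have hradius (t : ℝ) : (γ t).1 = a₀ * Real.exp t := by rw [radius_eq_mul_exp hγ, hγ₀]
  refine ⟨fun t => (γ t).2.1, fun t => (γ t).2.2 ⨯₃ (γ t).2.1, congrArg (·.2.1) hγ₀,
    ?_, fun t => ⟨hunit t, hasDerivAt_position hγ t, ?_⟩⟩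
  · simp only [hγ₀, cross_cross_eq_smul_sub_smul, hW₀, dotProduct_comm P₀, hP₀, one_smul,
      zero_smul, sub_zero]
  · simpa only [hradius] using hasDerivAt_momentum_cross_position hγ rfl (hunit t) (horth t)

lemma hasDerivAt_comp_log_div {E : Type*} [NormedAddCommGroup E] [NormedSpace ℝ E] {w : ℝ → E}
    {w' : E} {a₀ a : ℝ} (ha₀ : a₀ ≠ 0) (ha : a ≠ 0) (hw : HasDerivAt w w' (Real.log (a / a₀))) :
    HasDerivAt (fun r => w (Real.log (r / a₀))) (a⁻¹ • w') a := by
  have hlog : HasDerivAt (fun r => Real.log (r / a₀)) a⁻¹ a :=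
    (((hasDerivAt_id a).div_const a₀).log (div_ne_zero ha ha₀)).congr_deriv (by
      simp only [id]; field_simp)
  exact hw.scomp a hlog

theorem exists_radial_profile_of_force (hf : ContDiff ℝ 1 f) {K : ℝ}
    (hK : ∀ a w, w ⬝ᵥ w = 1 → f (a, w) ⬝ᵥ f (a, w) ≤ K * (1 + a ^ 4)) {a₀ : ℝ} (ha₀ : 0 < a₀)
    {W₀ V₀ : Fin 3 → ℝ} (hW₀ : W₀ ⬝ᵥ W₀ = 1) (hV₀ : W₀ ⬝ᵥ V₀ = 0) :
    ∃ W V : ℝ → Fin 3 → ℝ, W a₀ = W₀ ∧ V a₀ = V₀ ∧ ∀ a > 0,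
      W a ⬝ᵥ W a = 1 ∧ HasDerivAt W (V a) a ∧
      HasDerivAt V (-((V a ⬝ᵥ V a) • W a) - a⁻¹ • V a
        - (a⁻¹) ^ 2 • (f (a, W a) - (f (a, W a) ⬝ᵥ W a) • W a) - (c / a) • (W a ⨯₃ V a)) a := by
  obtain ⟨w, p, hw₀, hp₀, hwp⟩ := exists_unit_curve_of_force (c := c) hf hK a₀
    (P₀ := a₀ • V₀) hW₀ (by rw [dotProduct_smul, hV₀, smul_zero])
  refine ⟨fun a => w (Real.log (a / a₀)), fun a => a⁻¹ • p (Real.log (a / a₀)), ?_, ?_,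
    fun a ha => ?_⟩
  · simp only [div_self ha₀.ne', Real.log_one, hw₀]
  · simp only [div_self ha₀.ne', Real.log_one, hp₀, inv_smul_smul₀ ha₀.ne']
  obtain ⟨hunit, hw, hp⟩ := hwp (Real.log (a / a₀))
  refine ⟨hunit, hasDerivAt_comp_log_div ha₀.ne' ha.ne' hw, ?_⟩
  rw [Real.exp_log (div_pos ha ha₀), mul_div_cancel₀ a ha₀.ne'] at hp
  refine ((hasDerivAt_inv ha.ne').smul
    (hasDerivAt_comp_log_div ha₀.ne' ha.ne' hp)).congr_deriv ?_
  simp only [smul_dotProduct, dotProduct_smul, map_smul, smul_eq_mul]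
  module

end RadialSystem

section SphericalProfile

lemma dot3_eq_dotProduct (v w : Fin 3 → ℝ) : dot3 v w = v ⬝ᵥ w := by
  simp [dot3, dotProduct, Fin.sum_univ_three]

lemma cross3_eq_crossProduct (v w : Fin 3 → ℝ) : cross3 v w = v ⨯₃ w :=
  (cross_apply v w).symm

lemma e0_dotProduct_self : e0 ⬝ᵥ e0 = 1 := by
  simp [e0]

lemma contDiff_gfun (k b : ℝ) {n : WithTop ℕ∞} : ContDiff ℝ n (gfun k b) := by
  unfold gfun
  fun_prop

/-- The force `(g'(w · e₀) + μ a²) e₀` whose component tangent to the sphere at `w`, divided by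
`a²`, is the zeroth-order part of the reduced equivariant equation. -/
noncomputable def polarForce (k b μ : ℝ) (x : ℝ × (Fin 3 → ℝ)) : Fin 3 → ℝ :=
  (deriv (gfun k b) (x.2 ⬝ᵥ e0) + μ * x.1 ^ 2) • e0

lemma contDiff_polarForce (k b μ : ℝ) : ContDiff ℝ 1 (polarForce k b μ) := by
  have hg : ContDiff ℝ 1 (deriv (gfun k b)) := (contDiff_gfun k b (n := 2)).deriv'
  have hdot : ContDiff ℝ 1 fun x : ℝ × (Fin 3 → ℝ) => x.2 ⬝ᵥ e0 := by
    simp only [dotProduct]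
    fun_prop
  exact ((hg.comp hdot).add (by fun_prop)).smul contDiff_const

lemma exists_polarForce_dotProduct_self_le (k b μ : ℝ) :
    ∃ K, ∀ a w, w ⬝ᵥ w = 1 →
      polarForce k b μ (a, w) ⬝ᵥ polarForce k b μ (a, w) ≤ K * (1 + a ^ 4) := by
  obtain ⟨M, hM⟩ := (isCompact_Icc (a := (-1 : ℝ)) (b := 1)).exists_bound_of_continuousOn
    ((contDiff_gfun k b (n := 1)).continuous_deriv le_rfl).continuousOn
  refine ⟨2 * (M ^ 2 + μ ^ 2), fun a w hw => ?_⟩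
  have hheight : |w ⬝ᵥ e0| ≤ 1 := by
    linarith [two_mul_abs_dotProduct_le w e0, hw, e0_dotProduct_self]
  have hg : deriv (gfun k b) (w ⬝ᵥ e0) ^ 2 ≤ M ^ 2 := sq_le_sq.2 <|
    (hM _ (abs_le.1 hheight)).trans (le_abs_self M)
  calc polarForce k b μ (a, w) ⬝ᵥ polarForce k b μ (a, w)
      = (deriv (gfun k b) (w ⬝ᵥ e0) + μ * a ^ 2) ^ 2 := by
        simp only [polarForce, smul_dotProduct, dotProduct_smul, e0_dotProduct_self, smul_eq_mul]
        ring
    _ ≤ 2 * (deriv (gfun k b) (w ⬝ᵥ e0) ^ 2 + (μ * a ^ 2) ^ 2) := add_sq_le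
    _ ≤ 2 * (M ^ 2 + μ ^ 2) * (1 + a ^ 4) := by
        nlinarith [mul_nonneg (sq_nonneg M) (by positivity : 0 ≤ a ^ 4), sq_nonneg μ]

lemma isSphProfile_of_hasDerivAt {k b c μ : ℝ} {W V : ℝ → Fin 3 → ℝ}
    (hW : ∀ a > 0, W a ⬝ᵥ W a = 1) (hWV : ∀ a > 0, HasDerivAt W (V a) a)
    (hV : ∀ a > 0, HasDerivAt V (-((V a ⬝ᵥ V a) • W a) - a⁻¹ • V a
      - (a⁻¹) ^ 2 • (polarForce k b μ (a, W a) - (polarForce k b μ (a, W a) ⬝ᵥ W a) • W a)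
      - (c / a) • (W a ⨯₃ V a)) a) :
    IsSphProfile k b c μ (Ioi 0) W := by
  have hWV' (a : ℝ) (ha : 0 < a) : deriv W =ᶠ[nhds a] V :=
    Filter.eventually_of_mem (Ioi_mem_nhds ha) fun r hr => (hWV r hr).deriv
  refine ⟨subset_rfl, fun a ha => ⟨(hWV a ha).differentiableAt,
    (hV a ha).differentiableAt.congr_of_eventuallyEq (hWV' a ha)⟩,
    fun a ha => (dot3_eq_dotProduct _ _).trans (hW a ha), fun a ha => ?_⟩
  have ha' : a ≠ 0 := (mem_Ioi.1 ha).ne'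
  rw [(hWV' a ha).deriv_eq, (hV a ha).deriv, (hWV a ha).deriv]
  simp only [dot3_eq_dotProduct, cross3_eq_crossProduct, polarForce, smul_dotProduct,
    dotProduct_comm e0 (W a), smul_eq_mul]
  match_scalars <;> field_simp <;> ring

lemma IsSphProfile.mono {k b c μ : ℝ} {J J' : Set ℝ} {W : ℝ → Fin 3 → ℝ}
    (h : IsSphProfile k b c μ J W) (hJ : J' ⊆ J) : IsSphProfile k b c μ J' W :=
  ⟨hJ.trans h.1, fun a ha => h.2.1 a (hJ ha), fun a ha => h.2.2.1 a (hJ ha),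
    fun a ha => h.2.2.2 a (hJ ha)⟩

theorem stmt5_general (k b c μ a₀ : ℝ) (ha₀ : 0 < a₀) (W₀ V₀ : Fin 3 → ℝ)
    (hW₀ : dot3 W₀ W₀ = 1) (horth : dot3 W₀ V₀ = 0) :
    ∃ W : ℝ → Fin 3 → ℝ,
      IsSphProfile k b c μ (Ioi 0) W ∧ W a₀ = W₀ ∧ deriv W a₀ = V₀ := by
  rw [dot3_eq_dotProduct] at hW₀ horth
  obtain ⟨K, hK⟩ := exists_polarForce_dotProduct_self_le k b μ
  obtain ⟨W, V, hWa₀, hVa₀, hWV⟩ := exists_radial_profile_of_force (c := c)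
    (contDiff_polarForce k b μ) hK ha₀ hW₀ horth
  have hderiv (a : ℝ) (ha : 0 < a) : HasDerivAt W (V a) a := (hWV a ha).2.1
  exact ⟨W, isSphProfile_of_hasDerivAt (fun a ha => (hWV a ha).1) hderiv
    (fun a ha => (hWV a ha).2.2), hWa₀, (hderiv a₀ ha₀).deriv.trans hVa₀⟩

end SphericalProfile

/-- Global existence on `[a₀,∞)` of spherical profiles with prescribed tangential data:
solutions with compact target `S²` never blow up in finite radial variable. -/
theorem stmt5 (k b c μ a₀ : ℝ) (ha₀ : 0 < a₀) (W₀ V₀ : Fin 3 → ℝ)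
    (hW₀ : dot3 W₀ W₀ = 1) (horth : dot3 W₀ V₀ = 0) :
    ∃ W : ℝ → Fin 3 → ℝ,
      IsSphProfile k b c μ (Ici a₀) W ∧ W a₀ = W₀ ∧ deriv W a₀ = V₀ := by
  obtain ⟨W, hW, h₀⟩ := stmt5_general k b c μ a₀ ha₀ W₀ V₀ hW₀ horth
  exact ⟨W, hW.mono (Ici_subset_Ioi.2 ha₀), h₀⟩
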